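/- Let A be a Hopf algebra over a field k with antipode S and let X and Y be left Yetter–Drinfel'd modules over A. Let c_{X,Y}(x⊗y) = x_{(-1)}·y ⊗ x_{(0)} denote the Yetter–Drinfel'd braiding, let θ_{Y⊗X} be the map u ↦ S(u_{(-1)})·u_{(0)} on the tensor product Yetter–Drinfel'd module Y ⊗ X, and let θ_X, θ_Y be the corresponding maps on X and Y. Then c_{Y,X}(θ_{Y⊗X}(c_{X,Y}(x⊗y))) = θ_X(x) ⊗ θ_Y(y) for all x ∈ X, y ∈ Y. -/

import Mathlib

open TensorProduct

noncomputable section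

variable {k : Type*} [Field k]
variable {A : Type*} [Ring A] [HopfAlgebra k A]
variable {X Y Z : Type*} [AddCommGroup X] [Module k X] [AddCommGroup Y] [Module k Y]
  [AddCommGroup Z] [Module k Z]

/-- LHS of the left Yetter–Drinfel'd compatibility condition, as a linear map
`A ⊗ X → A ⊗ X` sending `h ⊗ x` to `h₍₁₎x₍₋₁₎ ⊗ h₍₂₎ · x₍₀₎`. -/
def ydL (act : A ⊗[k] X →ₗ[k] X) (coact : X →ₗ[k] A ⊗[k] X) :
    A ⊗[k] X →ₗ[k] A ⊗[k] X :=
  TensorProduct.map (LinearMap.mul' k A) act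
    ∘ₗ (TensorProduct.tensorTensorTensorComm k A A A X).toLinearMap
    ∘ₗ TensorProduct.map (Coalgebra.comul (R := k)) coact

/-- RHS of the left Yetter–Drinfel'd compatibility condition, sending `h ⊗ x` to
`(h₍₁₎·x)₍₋₁₎ h₍₂₎ ⊗ (h₍₁₎·x)₍₀₎`. -/
def ydR (act : A ⊗[k] X →ₗ[k] X) (coact : X →ₗ[k] A ⊗[k] X) :
    A ⊗[k] X →ₗ[k] A ⊗[k] X :=
  TensorProduct.map (LinearMap.mul' k A) LinearMap.id
    ∘ₗ (TensorProduct.assoc k A A X).symm.toLinearMap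
    ∘ₗ LinearMap.lTensor A (TensorProduct.comm k X A).toLinearMap
    ∘ₗ (TensorProduct.assoc k A X A).toLinearMap
    ∘ₗ LinearMap.rTensor A coact
    ∘ₗ LinearMap.rTensor A act
    ∘ₗ (TensorProduct.assoc k A X A).symm.toLinearMap
    ∘ₗ LinearMap.lTensor A (TensorProduct.comm k A X).toLinearMap
    ∘ₗ (TensorProduct.assoc k A A X).toLinearMap
    ∘ₗ LinearMap.rTensor X (Coalgebra.comul (R := k))

/-- A left Yetter–Drinfel'd module structure over the Hopf algebra `A` on the
vector space `X`: a left action, a left coaction, and the compatibility. -/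
structure IsYD (act : A ⊗[k] X →ₗ[k] X) (coact : X →ₗ[k] A ⊗[k] X) : Prop where
  act_one : ∀ x : X, act (1 ⊗ₜ[k] x) = x
  act_mul : ∀ (a a' : A) (x : X),
    act ((a * a') ⊗ₜ[k] x) = act (a ⊗ₜ[k] act (a' ⊗ₜ[k] x))
  coassoc : (TensorProduct.assoc k A A X).toLinearMap
      ∘ₗ LinearMap.rTensor X (Coalgebra.comul (R := k)) ∘ₗ coact
      = LinearMap.lTensor A coact ∘ₗ coact
  counit_coact : (TensorProduct.lid k X).toLinearMap
      ∘ₗ LinearMap.rTensor X (Coalgebra.counit (R := k)) ∘ₗ coact = LinearMap.id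
  yd : ydL act coact = ydR act coact

/-- The diagonal action `h · (x ⊗ y) = h₍₁₎·x ⊗ h₍₂₎·y` on a tensor product. -/
def tAct (actX : A ⊗[k] X →ₗ[k] X) (actY : A ⊗[k] Y →ₗ[k] Y) :
    A ⊗[k] (X ⊗[k] Y) →ₗ[k] X ⊗[k] Y :=
  TensorProduct.map actX actY
    ∘ₗ (TensorProduct.tensorTensorTensorComm k A A X Y).toLinearMap
    ∘ₗ LinearMap.rTensor (X ⊗[k] Y) (Coalgebra.comul (R := k))

/-- The codiagonal coaction `x ⊗ y ↦ x₍₋₁₎y₍₋₁₎ ⊗ (x₍₀₎ ⊗ y₍₀₎)` on a tensor product. -/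
def tCoact (coactX : X →ₗ[k] A ⊗[k] X) (coactY : Y →ₗ[k] A ⊗[k] Y) :
    X ⊗[k] Y →ₗ[k] A ⊗[k] (X ⊗[k] Y) :=
  LinearMap.rTensor (X ⊗[k] Y) (LinearMap.mul' k A)
    ∘ₗ (TensorProduct.tensorTensorTensorComm k A X A Y).toLinearMap
    ∘ₗ TensorProduct.map coactX coactY

/-- The Yetter–Drinfel'd braiding `c_{X,Y} : x ⊗ y ↦ x₍₋₁₎ · y ⊗ x₍₀₎`. -/
def ydBraid (coactX : X →ₗ[k] A ⊗[k] X) (actY : A ⊗[k] Y →ₗ[k] Y) :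
    X ⊗[k] Y →ₗ[k] Y ⊗[k] X :=
  LinearMap.rTensor X actY
    ∘ₗ (TensorProduct.assoc k A Y X).symm.toLinearMap
    ∘ₗ LinearMap.lTensor A (TensorProduct.comm k X Y).toLinearMap
    ∘ₗ (TensorProduct.assoc k A X Y).toLinearMap
    ∘ₗ LinearMap.rTensor Y coactX

/-- The map `θ_X : x ↦ S(x₍₋₁₎) · x₍₀₎`. -/
def ydTheta (act : A ⊗[k] X →ₗ[k] X) (coact : X →ₗ[k] A ⊗[k] X) : X →ₗ[k] X :=
  act ∘ₗ LinearMap.rTensor X (HopfAlgebra.antipode (R := k)) ∘ₗ coact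

/-!
By colinearity of the braiding and `S(ab) = S(b)S(a)`,
`θ(c(x ⊗ y)) = S(x₍₋₁₎y₍₋₁₎) · c(x₍₀₎ ⊗ y₍₀₎) = S(y₍₋₁₎) · (S(x₍₋₁₎) · c(x₍₀₎ ⊗ y₍₀₎))`.
The inner factor is `S(x₍₋₁₎) · c(x₍₀₎ ⊗ y) = y ⊗ θ(x)`: by coassociativity it is
`Δ(S(a₍₁₎))(a₍₂₎ ⊗ 1)` with `a = x₍₋₁₎`, applied to `y ⊗ x₍₀₎`, and this element of `A ⊗ A` is
`1 ⊗ S(a)`. Linearity of the second braiding then turns `c(S(y₍₋₁₎) · (y₍₀₎ ⊗ θ(x)))` into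
`S(y₍₋₁₎) · c(y₍₀₎ ⊗ θ(x))`, which is `θ(x) ⊗ θ(y)` by the same identity with `x` and `y` exchanged.
-/

open Coalgebra HopfAlgebra WithConv

section Convolution

variable {R H : Type*} [CommSemiring R] [Semiring H]

lemma toConv_includeLeft_mul_includeRight [Bialgebra R H] :
    toConv (Algebra.TensorProduct.includeLeft : H →ₐ[R] H ⊗[R] H).toLinearMap *
      toConv (Algebra.TensorProduct.includeRight : H →ₐ[R] H ⊗[R] H).toLinearMap =
      toConv (Bialgebra.comulAlgHom R H).toLinearMap := by
  ext a
  simp [(ℛ R a).convMul_apply, (ℛ R a).eq]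

variable [HopfAlgebra R H]

section AlgHom

variable {B : Type*} [Semiring B] [Algebra R B]

lemma toConv_comp_antipode_mul (f : H →ₐ[R] B) :
    toConv (f.toLinearMap ∘ₗ antipode R) * toConv f.toLinearMap = 1 := by
  ext a
  simp [(ℛ R a).convMul_apply, ← map_mul, ← map_sum,
    sum_antipode_mul_eq_algebraMap_counit (ℛ R a)]

lemma toConv_mul_comp_antipode (f : H →ₐ[R] B) :
    toConv f.toLinearMap * toConv (f.toLinearMap ∘ₗ antipode R) = 1 := by
  ext a
  simp [(ℛ R a).convMul_apply, ← map_mul, ← map_sum,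
    sum_mul_antipode_eq_algebraMap_counit (ℛ R a)]

end AlgHom

/-- In the convolution algebra `Δ = ι₁ * ι₂` for the two inclusions `ι₁, ι₂` of `H` in `H ⊗ H`.
Multiplying by the convolution inverses `Δ ∘ S` and `ι₂ ∘ S` gives `(Δ ∘ S) * ι₁ = ι₂ ∘ S`. -/
lemma sum_comul_antipode_mul_tmul_one {ι : Type*} {a : H} (r : Coalgebra.Repr R a ι) :
    ∑ i ∈ r.index, comul (R := R) (antipode R (r.left i)) * (r.right i ⊗ₜ[R] 1) =
      1 ⊗ₜ[R] antipode R a := by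
  let Δ := Bialgebra.comulAlgHom R H
  let ι₁ : H →ₐ[R] H ⊗[R] H := Algebra.TensorProduct.includeLeft
  let ι₂ : H →ₐ[R] H ⊗[R] H := Algebra.TensorProduct.includeRight
  have convolution : toConv (Δ.toLinearMap ∘ₗ antipode R) * toConv ι₁.toLinearMap =
      toConv (ι₂.toLinearMap ∘ₗ antipode R) :=
    calc
      _ = toConv (Δ.toLinearMap ∘ₗ antipode R) * (toConv ι₁.toLinearMap * toConv ι₂.toLinearMap) *
            toConv (ι₂.toLinearMap ∘ₗ antipode R) := by
        simp only [mul_assoc, toConv_mul_comp_antipode, mul_one]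
      _ = _ := by
        rw [toConv_includeLeft_mul_includeRight, toConv_comp_antipode_mul, one_mul]
  simpa [r.convMul_apply, Δ, ι₁, ι₂] using congr($convolution a)

end Convolution

/-- A left `A`-module structure on `X`, encoded like the actions in `IsYD` as a map `A ⊗ X → X`. -/
structure IsAction (act : A ⊗[k] X →ₗ[k] X) : Prop where
  one_tmul : ∀ x : X, act (1 ⊗ₜ[k] x) = x
  mul_tmul : ∀ (a b : A) (x : X), act ((a * b) ⊗ₜ[k] x) = act (a ⊗ₜ[k] act (b ⊗ₜ[k] x))

/-- Coassociativity of a map `X → A ⊗ X`, in the form in which it appears in `IsYD`. -/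
def IsCoassoc (coact : X →ₗ[k] A ⊗[k] X) : Prop :=
  (TensorProduct.assoc k A A X).toLinearMap ∘ₗ comul.rTensor X ∘ₗ coact = coact.lTensor A ∘ₗ coact

section

variable {actX : A ⊗[k] X →ₗ[k] X} {coactX : X →ₗ[k] A ⊗[k] X}
  {actY : A ⊗[k] Y →ₗ[k] Y} {coactY : Y →ₗ[k] A ⊗[k] Y}

section Sweedler

variable {ι : Type*} {a : A} (r : Coalgebra.Repr k a ι)

lemma ydL_tmul (x : X) : ydL actX coactX (a ⊗ₜ x) =
    ∑ i ∈ r.index,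
      map (LinearMap.mulLeft k (r.left i)) (curry actX (r.right i)) (coactX x) := by
  simp only [ydL, LinearMap.comp_apply, map_tmul, ← r.eq, sum_tmul, map_sum]
  refine Finset.sum_congr rfl fun i _ => ?_
  induction coactX x with
  | zero => simp
  | add u v hu hv => simp only [tmul_add, map_add, hu, hv]
  | tmul b z => simp

lemma ydR_tmul (x : X) : ydR actX coactX (a ⊗ₜ x) =
    ∑ i ∈ r.index,
      (LinearMap.mulRight k (r.right i)).rTensor X (coactX (actX (r.left i ⊗ₜ x))) := by
  simp only [ydR, LinearMap.comp_apply, LinearMap.rTensor_tmul, ← r.eq, sum_tmul, map_sum]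
  refine Finset.sum_congr rfl fun i _ => ?_
  simp only [LinearEquiv.coe_coe, assoc_tmul, LinearMap.lTensor_tmul, comm_tmul, assoc_symm_tmul,
    LinearMap.rTensor_tmul]
  induction coactX (actX (r.left i ⊗ₜ x)) with
  | zero => simp
  | add u v hu hv => simp only [add_tmul, map_add, hu, hv]
  | tmul b z => simp

lemma tAct_tmul (u : X ⊗[k] Y) : tAct actX actY (a ⊗ₜ u) =
    ∑ i ∈ r.index, map (curry actX (r.left i)) (curry actY (r.right i)) u := by
  simp only [tAct, LinearMap.comp_apply, LinearMap.rTensor_tmul, ← r.eq, sum_tmul, map_sum]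
  refine Finset.sum_congr rfl fun i _ => ?_
  induction u with
  | zero => simp
  | add u v hu hv => simp only [tmul_add, map_add, hu, hv]
  | tmul x y => simp

end Sweedler

lemma IsYD.isAction (hX : IsYD actX coactX) : IsAction actX :=
  ⟨hX.act_one, hX.act_mul⟩

namespace IsAction

/-- The representation `a ↦ (x ↦ a · x)` attached to a left action. -/
def toEnd (hX : IsAction actX) : A →ₐ[k] Module.End k X :=
  AlgHom.ofLinearMap (curry actX) (LinearMap.ext hX.one_tmul)
    fun a b => LinearMap.ext (hX.mul_tmul a b)

/-- The factorwise representation of `A ⊗ A` on `X ⊗ Y`, whose restriction along the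
comultiplication is the diagonal action. -/
def tensorEnd (hX : IsAction actX) (hY : IsAction actY) :
    A ⊗[k] A →ₐ[k] Module.End k (X ⊗[k] Y) :=
  Module.endTensorEndAlgHom.comp (Algebra.TensorProduct.map hX.toEnd hY.toEnd)

@[simp]
lemma tensorEnd_tmul (hX : IsAction actX) (hY : IsAction actY) (a b : A) (x : X) (y : Y) :
    hX.tensorEnd hY (a ⊗ₜ b) (x ⊗ₜ y) = actX (a ⊗ₜ x) ⊗ₜ actY (b ⊗ₜ y) := rfl

lemma tAct_tmul_eq_tensorEnd (hX : IsAction actX) (hY : IsAction actY) (a : A) (u : X ⊗[k] Y) :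
    tAct actX actY (a ⊗ₜ u) = hX.tensorEnd hY (comul (R := k) a) u := by
  simp only [tAct_tmul (ℛ k a), ← (ℛ k a).eq, map_sum, LinearMap.sum_apply]
  rfl

lemma tAct (hX : IsAction actX) (hY : IsAction actY) : IsAction (tAct actX actY) where
  one_tmul u := by simp [tAct_tmul_eq_tensorEnd hX hY]
  mul_tmul a b u := by simp [tAct_tmul_eq_tensorEnd hX hY]

end IsAction

lemma ydBraid_tmul (x : X) (y : Y) :
    ydBraid coactX actY (x ⊗ₜ y) = ((curry actY).flip y).rTensor X (coactX x) := by
  simp only [ydBraid, LinearMap.comp_apply, LinearMap.rTensor_tmul]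
  induction coactX x with
  | zero => simp
  | add u v hu hv => simp only [add_tmul, map_add, hu, hv]
  | tmul a z => simp

lemma ydBraid_tAct_tmul (hY : IsAction actY) (a : A) (x : X) (y : Y) :
    ydBraid coactX actY (tAct actX actY (a ⊗ₜ (x ⊗ₜ y))) =
      ((curry actY).flip y).rTensor X (ydR actX coactX (a ⊗ₜ x)) := by
  have act_mulRight (b : A) :
      (curry actY).flip (actY (b ⊗ₜ y)) = (curry actY).flip y ∘ₗ LinearMap.mulRight k b :=
    LinearMap.ext fun c => (hY.mul_tmul c b y).symm
  simp [tAct_tmul (ℛ k a), ydR_tmul (ℛ k a), ydBraid_tmul, act_mulRight,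
    LinearMap.rTensor_comp]

lemma tAct_ydBraid_tmul (hY : IsAction actY) (a : A) (x : X) (y : Y) :
    tAct actY actX (a ⊗ₜ ydBraid coactX actY (x ⊗ₜ y)) =
      ((curry actY).flip y).rTensor X (ydL actX coactX (a ⊗ₜ x)) := by
  have act_mulLeft (b : A) :
      curry actY b ∘ₗ (curry actY).flip y = (curry actY).flip y ∘ₗ LinearMap.mulLeft k b :=
    LinearMap.ext fun c => (hY.mul_tmul b c y).symm
  simp [tAct_tmul (ℛ k a), ydL_tmul (ℛ k a), ydBraid_tmul, LinearMap.rTensor, map_map, act_mulLeft]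

theorem ydBraid_comp_tAct (hX : ydL actX coactX = ydR actX coactX) (hY : IsAction actY) :
    ydBraid coactX actY ∘ₗ tAct actX actY =
      tAct actY actX ∘ₗ (ydBraid coactX actY).lTensor A := by
  ext a x y
  simp [ydBraid_tAct_tmul hY, tAct_ydBraid_tmul hY, hX]

lemma IsCoassoc.apply_lTensor {W : Type*} [AddCommGroup W] [Module k W]
    (hX : IsCoassoc coactX) {F : A ⊗[k] (A ⊗[k] X) →ₗ[k] W} {G : A ⊗[k] X →ₗ[k] W}
    (hFG : ∀ a z, F (TensorProduct.assoc k A A X (comul (R := k) a ⊗ₜ z)) = G (a ⊗ₜ z)) (x : X) :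
    F (coactX.lTensor A (coactX x)) = G (coactX x) := by
  have contraction : F ∘ₗ (TensorProduct.assoc k A A X).toLinearMap ∘ₗ comul.rTensor X = G :=
    TensorProduct.ext' hFG
  rw [← contraction]
  exact congr(F ($hX.symm x))

/-- The rearrangement `(a ⊗ x) ⊗ (b ⊗ y) ↦ ab ⊗ (x ⊗ y)`, which turns a pair of coactions into the
codiagonal coaction. -/
def mulTensor : (A ⊗[k] X) ⊗[k] (A ⊗[k] Y) →ₗ[k] A ⊗[k] (X ⊗[k] Y) :=
  (LinearMap.mul' k A).rTensor (X ⊗[k] Y) ∘ₗ (tensorTensorTensorComm k A X A Y).toLinearMap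

@[simp]
lemma mulTensor_tmul (a b : A) (x : X) (y : Y) :
    mulTensor (k := k) ((a ⊗ₜ x) ⊗ₜ (b ⊗ₜ y)) = (a * b) ⊗ₜ (x ⊗ₜ y) := rfl

lemma tCoact_tmul (x : X) (y : Y) :
    tCoact coactX coactY (x ⊗ₜ y) = mulTensor (coactX x ⊗ₜ coactY y) := rfl

lemma mulTensor_tmul_tmul (w : A ⊗[k] X) (b : A) (y : Y) :
    mulTensor (w ⊗ₜ (b ⊗ₜ y)) =
      TensorProduct.assoc k A X Y ((LinearMap.mulRight k b).rTensor X w ⊗ₜ y) := by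
  induction w with
  | zero => simp
  | add u v hu hv => simp only [add_tmul, map_add, hu, hv]
  | tmul a x => simp

lemma tCoact_ydBraid_tmul (hX : IsCoassoc coactX) (x : X) (y : Y) :
    tCoact coactY coactX (ydBraid coactX actY (x ⊗ₜ y)) =
      TensorProduct.assoc k A Y X
        (((curry (ydR actY coactY)).flip y).rTensor X (coactX x)) := by
  have expand : tCoact coactY coactX (ydBraid coactX actY (x ⊗ₜ y)) =
      (mulTensor ∘ₗ (coactY ∘ₗ (curry actY).flip y).rTensor (A ⊗[k] X))
        (coactX.lTensor A (coactX x)) := by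
    rw [ydBraid_tmul]
    induction coactX x with
    | zero => simp
    | add u v hu hv => simp only [map_add, hu, hv]
    | tmul a z => simp [tCoact_tmul]
  rw [expand]
  refine hX.apply_lTensor (G := (TensorProduct.assoc k A Y X).toLinearMap ∘ₗ
    ((curry (ydR actY coactY)).flip y).rTensor X) (fun a z => ?_) x
  simp [← (ℛ k a).eq, sum_tmul, mulTensor_tmul_tmul, ydR_tmul (ℛ k a)]

lemma lTensor_ydBraid_tCoact_tmul (hX : IsCoassoc coactX) (x : X) (y : Y) :
    (ydBraid coactX actY).lTensor A (tCoact coactX coactY (x ⊗ₜ y)) =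
      TensorProduct.assoc k A Y X
        (((curry (ydL actY coactY)).flip y).rTensor X (coactX x)) := by
  obtain ⟨s, coact_y⟩ := exists_finset (coactY y)
  have expand : (ydBraid coactX actY).lTensor A (tCoact coactX coactY (x ⊗ₜ y)) =
      (∑ j ∈ s, map (LinearMap.mulRight k j.1) (((curry actY).flip j.2).rTensor X))
        (coactX.lTensor A (coactX x)) := by
    rw [tCoact_tmul]
    induction coactX x with
    | zero => simp
    | add u v hu hv => simp only [add_tmul, map_add, hu, hv]
    | tmul a z => simp [ydBraid_tmul, coact_y, tmul_sum]
  rw [expand]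
  refine hX.apply_lTensor (G := (TensorProduct.assoc k A Y X).toLinearMap ∘ₗ
    ((curry (ydL actY coactY)).flip y).rTensor X) (fun a z => ?_) x
  simp [← (ℛ k a).eq, sum_tmul, ydL_tmul (ℛ k a), coact_y]

theorem tCoact_comp_ydBraid (hX : IsCoassoc coactX) (hY : ydL actY coactY = ydR actY coactY) :
    tCoact coactY coactX ∘ₗ ydBraid coactX actY =
      (ydBraid coactX actY).lTensor A ∘ₗ tCoact coactX coactY := by
  ext x y
  simp [tCoact_ydBraid_tmul hX, lTensor_ydBraid_tCoact_tmul hX, hY]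

lemma tAct_antipode_ydBraid (hX : IsAction actX) (hcoX : IsCoassoc coactX) (hY : IsAction actY)
    (x : X) (y : Y) :
    tAct actY actX (map (antipode k) ((curry (ydBraid coactX actY)).flip y) (coactX x)) =
      y ⊗ₜ ydTheta actX coactX x := by
  have braid_y : (curry (ydBraid coactX actY)).flip y =
      ((curry actY).flip y).rTensor X ∘ₗ coactX :=
    LinearMap.ext fun x => ydBraid_tmul x y
  rw [braid_y, ← LinearMap.map_comp_lTensor]
  refine hcoX.apply_lTensor
    (F := tAct actY actX ∘ₗ map (antipode k) (((curry actY).flip y).rTensor X))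
    (G := mk k Y X y ∘ₗ actX ∘ₗ (antipode k).rTensor X) (fun a z => ?_) x
  let ρ := hY.tensorEnd hX
  have ρ_tmul_one (b : A) : actY (b ⊗ₜ y) ⊗ₜ z = ρ (b ⊗ₜ 1) (y ⊗ₜ z) := by
    simp [ρ, hX.one_tmul]
  calc
    _ = ∑ i ∈ (ℛ k a).index,
          tAct actY actX (antipode k ((ℛ k a).left i) ⊗ₜ (actY ((ℛ k a).right i ⊗ₜ y) ⊗ₜ z)) := by
      rw [← (ℛ k a).eq]
      simp [sum_tmul]
    _ = ρ (∑ i ∈ (ℛ k a).index,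
          comul (R := k) (antipode k ((ℛ k a).left i)) * ((ℛ k a).right i ⊗ₜ 1)) (y ⊗ₜ z) := by
      simp [ρ_tmul_one, hY.tAct_tmul_eq_tensorEnd hX, ρ]
    _ = y ⊗ₜ actX (antipode k a ⊗ₜ z) := by
      rw [sum_comul_antipode_mul_tmul_one]
      simp [ρ, hY.one_tmul]

lemma IsAction.act_antipode_mulTensor {Z : Type*} [AddCommGroup Z] [Module k Z]
    {actZ : A ⊗[k] Z →ₗ[k] Z} (hZ : IsAction actZ) (f : X ⊗[k] Y →ₗ[k] Z)
    (w : A ⊗[k] X) (b : A) (y : Y) :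
    actZ (map (antipode k) f (mulTensor (w ⊗ₜ (b ⊗ₜ y)))) =
      actZ (antipode k b ⊗ₜ actZ (map (antipode k) ((curry f).flip y) w)) := by
  induction w with
  | zero => simp
  | add u v hu hv => simp only [add_tmul, tmul_add, map_add, hu, hv]
  | tmul a x => simp [antipode_mul_antidistrib, hZ.mul_tmul]

lemma ydTheta_ydBraid_tmul (hX : IsYD actX coactX) (hY : IsYD actY coactY) (x : X) (y : Y) :
    ydTheta (tAct actY actX) (tCoact coactY coactX) (ydBraid coactX actY (x ⊗ₜ y)) =
      tAct actY actX (map (antipode k) ((mk k Y X).flip (ydTheta actX coactX x)) (coactY y)) := by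
  have colinear : ydTheta (tAct actY actX) (tCoact coactY coactX) (ydBraid coactX actY (x ⊗ₜ y)) =
      tAct actY actX (map (antipode k) (ydBraid coactX actY) (tCoact coactX coactY (x ⊗ₜ y))) := by
    rw [← LinearMap.rTensor_comp_lTensor, LinearMap.comp_apply,
      ← LinearMap.comp_apply _ (tCoact _ _), ← tCoact_comp_ydBraid hX.coassoc hY.yd]
    rfl
  rw [colinear, tCoact_tmul]
  induction coactY y with
  | zero => simp
  | add u v hu hv => simp only [tmul_add, map_add, hu, hv]
  | tmul b y =>
    rw [(hY.isAction.tAct hX.isAction).act_antipode_mulTensor,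
      tAct_antipode_ydBraid hX.isAction hX.coassoc hY.isAction]
    rfl

end

/-- For left Yetter–Drinfel'd modules `X`, `Y` over a Hopf algebra
`A`, with `c` the Yetter–Drinfel'd braiding and `θ` the map `u ↦ S(u₍₋₁₎)·u₍₀₎`
(on `X`, on `Y`, and on the tensor product Yetter–Drinfel'd module `Y ⊗ X`), one has
`c_{Y,X}(θ_{Y⊗X}(c_{X,Y}(x ⊗ y))) = θ_X(x) ⊗ θ_Y(y)`. -/
theorem ydTheta_braiding (actX : A ⊗[k] X →ₗ[k] X) (coactX : X →ₗ[k] A ⊗[k] X)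
    (actY : A ⊗[k] Y →ₗ[k] Y) (coactY : Y →ₗ[k] A ⊗[k] Y)
    (hX : IsYD actX coactX) (hY : IsYD actY coactY) (x : X) (y : Y) :
    ydBraid coactY actX
        (ydTheta (tAct actY actX) (tCoact coactY coactX)
          (ydBraid coactX actY (x ⊗ₜ[k] y)))
      = (ydTheta actX coactX x) ⊗ₜ[k] (ydTheta actY coactY y) := by
  have linear := ydBraid_comp_tAct hY.yd hX.isAction
  rw [ydTheta_ydBraid_tmul hX hY, ← LinearMap.comp_apply, linear,
    ← tAct_antipode_ydBraid hY.isAction hY.coassoc hX.isAction,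
    LinearMap.comp_apply, LinearMap.lTensor_map]
  rfl

end
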